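/- Let p1, q1, p2, q2 be pairwise distinct reals, X1, X2 ∈ S, and assume α_{12}(X1,X2) is well defined and nonzero. Let (X1',X2') = R(p1,q1;p2,q2)(X1,X2). Then X1' and X2' are again rank-one K-projections (i.e., X1', X2' ∈ S), and moreover (p1−q1)(X1' − X1) + (p2−q2)(X2' − X2) = 0. -/

import Mathlib

open Matrix

/-- The space of real `m × n` matrices. -/
abbrev Mat (m n : ℕ) := Matrix (Fin m) (Fin n) ℝ

/-- `X` is a rank-one `K`-projection, i.e. `X ∈ S`. -/
def InS {m n : ℕ} (K : Matrix (Fin n) (Fin m) ℝ) (X : Mat m n) : Prop :=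
  X * K * X = X ∧ X.rank = 1

/-- `A(p,q,λ,X) = 1ₘ − ((p−q)/(λ−q)) X K`. -/
noncomputable def Amat {m n : ℕ} (K : Matrix (Fin n) (Fin m) ℝ) (p q lam : ℝ) (X : Mat m n) :
    Matrix (Fin m) (Fin m) ℝ :=
  1 - ((p - q) / (lam - q)) • (X * K)

/-- `Ã(p,q,λ,X) = 1ₙ − ((p−q)/(λ−q)) K X`. -/
noncomputable def Atil {m n : ℕ} (K : Matrix (Fin n) (Fin m) ℝ) (p q lam : ℝ) (X : Mat m n) :
    Matrix (Fin n) (Fin n) ℝ :=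
  1 - ((p - q) / (lam - q)) • (K * X)

/-- `B(p,q,λ,X) = 1ₘ + ((p−q)/(λ−p)) X K`. -/
noncomputable def Bmat {m n : ℕ} (K : Matrix (Fin n) (Fin m) ℝ) (p q lam : ℝ) (X : Mat m n) :
    Matrix (Fin m) (Fin m) ℝ :=
  1 + ((p - q) / (lam - p)) • (X * K)

/-- `B̃(p,q,λ,X) = 1ₙ + ((p−q)/(λ−p)) K X`. -/
noncomputable def Btil {m n : ℕ} (K : Matrix (Fin n) (Fin m) ℝ) (p q lam : ℝ) (X : Mat m n) :
    Matrix (Fin n) (Fin n) ℝ :=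
  1 + ((p - q) / (lam - p)) • (K * X)

/-- `α₁₂⁻¹ = 1 − ((p1−q1)(p2−q2))/((p2−p1)(q2−q1)) · tr(K X1 K X2)`. -/
noncomputable def adenom {m n : ℕ} (K : Matrix (Fin n) (Fin m) ℝ) (p1 q1 p2 q2 : ℝ)
    (X1 X2 : Mat m n) : ℝ :=
  1 - (p1 - q1) * (p2 - q2) / ((p2 - p1) * (q2 - q1)) * (K * X1 * K * X2).trace

/-- The Yang–Baxter map `R(p1,q1;p2,q2)`. -/
noncomputable def Rmap {m n : ℕ} (K : Matrix (Fin n) (Fin m) ℝ) (p1 q1 p2 q2 : ℝ)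
    (X : Mat m n × Mat m n) : Mat m n × Mat m n :=
  ((adenom K p1 q1 p2 q2 X.1 X.2)⁻¹ •
      ((1 - ((p2 - q2) / (p2 - p1)) • (X.2 * K)) * X.1 *
        (1 - ((p2 - q2) / (q1 - q2)) • (K * X.2))),
   (adenom K p1 q1 p2 q2 X.1 X.2)⁻¹ •
      ((1 - ((p1 - q1) / (q2 - q1)) • (X.1 * K)) * X.2 *
        (1 - ((p1 - q1) / (p1 - p2)) • (K * X.1))))

/-- Trace denominator of the first component of the map `T`:
`tr[A₂(p1,X2) X1 B̃₂(q1,X2) K]`. -/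
noncomputable def Tden1 {m n : ℕ} (K : Matrix (Fin n) (Fin m) ℝ) (p1 q1 p2 q2 : ℝ)
    (X1 X2 : Mat m n) : ℝ :=
  (Amat K p2 q2 p1 X2 * X1 * Btil K p2 q2 q1 X2 * K).trace

/-- Trace denominator of the second component of the map `T`:
`tr[A₁(p2,X1) X2 B̃₁(q2,X1) K]`. -/
noncomputable def Tden2 {m n : ℕ} (K : Matrix (Fin n) (Fin m) ℝ) (p1 q1 p2 q2 : ℝ)
    (X1 X2 : Mat m n) : ℝ :=
  (Amat K p1 q1 p2 X1 * X2 * Btil K p1 q1 q2 X1 * K).trace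

/-- The (non-Yang–Baxter) map `T(p1,q1;p2,q2)`. -/
noncomputable def Tmap {m n : ℕ} (K : Matrix (Fin n) (Fin m) ℝ) (p1 q1 p2 q2 : ℝ)
    (X : Mat m n × Mat m n) : Mat m n × Mat m n :=
  ((Tden1 K p1 q1 p2 q2 X.1 X.2)⁻¹ • (Amat K p2 q2 p1 X.2 * X.1 * Btil K p2 q2 q1 X.2),
   (Tden2 K p1 q1 p2 q2 X.1 X.2)⁻¹ • (Amat K p1 q1 p2 X.1 * X.2 * Btil K p1 q1 q2 X.1))

/-- Trace denominator of the first component of `T⁻¹`: `tr[B₂(q1,X2) X1 Ã₂(p1,X2) K]`. -/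
noncomputable def Tinvden1 {m n : ℕ} (K : Matrix (Fin n) (Fin m) ℝ) (p1 q1 p2 q2 : ℝ)
    (X1 X2 : Mat m n) : ℝ :=
  (Bmat K p2 q2 q1 X2 * X1 * Atil K p2 q2 p1 X2 * K).trace

/-- Trace denominator of the second component of `T⁻¹`: `tr[B₁(q2,X1) X2 Ã₁(p2,X1) K]`. -/
noncomputable def Tinvden2 {m n : ℕ} (K : Matrix (Fin n) (Fin m) ℝ) (p1 q1 p2 q2 : ℝ)
    (X1 X2 : Mat m n) : ℝ :=
  (Bmat K p1 q1 q2 X1 * X2 * Atil K p1 q1 p2 X1 * K).trace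

/-- The map `Tinv(p1,q1;p2,q2)`, the inverse of `T(p1,q1;p2,q2)`. -/
noncomputable def Tinvmap {m n : ℕ} (K : Matrix (Fin n) (Fin m) ℝ) (p1 q1 p2 q2 : ℝ)
    (X : Mat m n × Mat m n) : Mat m n × Mat m n :=
  ((Tinvden1 K p1 q1 p2 q2 X.1 X.2)⁻¹ • (Bmat K p2 q2 q1 X.2 * X.1 * Atil K p2 q2 p1 X.2),
   (Tinvden2 K p1 q1 p2 q2 X.1 X.2)⁻¹ • (Bmat K p1 q1 q2 X.1 * X.2 * Atil K p1 q1 p2 X.1))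

/-- Trace denominator of the first component of `R⁻¹`: `tr[A₂(q1,X2) X1 B̃₂(p1,X2) K]`. -/
noncomputable def Rinvden1 {m n : ℕ} (K : Matrix (Fin n) (Fin m) ℝ) (p1 q1 p2 q2 : ℝ)
    (X1 X2 : Mat m n) : ℝ :=
  (Amat K p2 q2 q1 X2 * X1 * Btil K p2 q2 p1 X2 * K).trace

/-- Trace denominator of the second component of `R⁻¹`: `tr[B₁(p2,X1) X2 Ã₁(q2,X1) K]`. -/
noncomputable def Rinvden2 {m n : ℕ} (K : Matrix (Fin n) (Fin m) ℝ) (p1 q1 p2 q2 : ℝ)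
    (X1 X2 : Mat m n) : ℝ :=
  (Bmat K p1 q1 p2 X1 * X2 * Atil K p1 q1 q2 X1 * K).trace

/-- The map `Rinv(p1,q1;p2,q2)`, the inverse of `R(p1,q1;p2,q2)`. -/
noncomputable def Rinvmap {m n : ℕ} (K : Matrix (Fin n) (Fin m) ℝ) (p1 q1 p2 q2 : ℝ)
    (X : Mat m n × Mat m n) : Mat m n × Mat m n :=
  ((Rinvden1 K p1 q1 p2 q2 X.1 X.2)⁻¹ • (Amat K p2 q2 q1 X.2 * X.1 * Btil K p2 q2 p1 X.2),
   (Rinvden2 K p1 q1 p2 q2 X.1 X.2)⁻¹ • (Bmat K p1 q1 p2 X.1 * X.2 * Atil K p1 q1 q2 X.1))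

/-- `R` acting on components 1 and 2 of a triple. -/
noncomputable def R12t {m n : ℕ} (K : Matrix (Fin n) (Fin m) ℝ) (p1 q1 p2 q2 : ℝ)
    (X : Mat m n × Mat m n × Mat m n) : Mat m n × Mat m n × Mat m n :=
  ((Rmap K p1 q1 p2 q2 (X.1, X.2.1)).1, (Rmap K p1 q1 p2 q2 (X.1, X.2.1)).2, X.2.2)

/-- `R` acting on components 1 and 3 of a triple. -/
noncomputable def R13t {m n : ℕ} (K : Matrix (Fin n) (Fin m) ℝ) (p1 q1 p3 q3 : ℝ)
    (X : Mat m n × Mat m n × Mat m n) : Mat m n × Mat m n × Mat m n :=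
  ((Rmap K p1 q1 p3 q3 (X.1, X.2.2)).1, X.2.1, (Rmap K p1 q1 p3 q3 (X.1, X.2.2)).2)

/-- `R` acting on components 2 and 3 of a triple. -/
noncomputable def R23t {m n : ℕ} (K : Matrix (Fin n) (Fin m) ℝ) (p2 q2 p3 q3 : ℝ)
    (X : Mat m n × Mat m n × Mat m n) : Mat m n × Mat m n × Mat m n :=
  (X.1, Rmap K p2 q2 p3 q3 (X.2.1, X.2.2))

/-- `T` acting on components 1 and 2 of a triple. -/
noncomputable def T12t {m n : ℕ} (K : Matrix (Fin n) (Fin m) ℝ) (p1 q1 p2 q2 : ℝ)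
    (X : Mat m n × Mat m n × Mat m n) : Mat m n × Mat m n × Mat m n :=
  ((Tmap K p1 q1 p2 q2 (X.1, X.2.1)).1, (Tmap K p1 q1 p2 q2 (X.1, X.2.1)).2, X.2.2)

/-- `T` acting on components 1 and 3 of a triple. -/
noncomputable def T13t {m n : ℕ} (K : Matrix (Fin n) (Fin m) ℝ) (p1 q1 p3 q3 : ℝ)
    (X : Mat m n × Mat m n × Mat m n) : Mat m n × Mat m n × Mat m n :=
  ((Tmap K p1 q1 p3 q3 (X.1, X.2.2)).1, X.2.1, (Tmap K p1 q1 p3 q3 (X.1, X.2.2)).2)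

/-- `T` acting on components 2 and 3 of a triple. -/
noncomputable def T23t {m n : ℕ} (K : Matrix (Fin n) (Fin m) ℝ) (p2 q2 p3 q3 : ℝ)
    (X : Mat m n × Mat m n × Mat m n) : Mat m n × Mat m n × Mat m n :=
  (X.1, Tmap K p2 q2 p3 q3 (X.2.1, X.2.2))

/-- `T⁻¹` acting on components 2 and 3 of a triple. -/
noncomputable def Tinv23t {m n : ℕ} (K : Matrix (Fin n) (Fin m) ℝ) (p2 q2 p3 q3 : ℝ)
    (X : Mat m n × Mat m n × Mat m n) : Mat m n × Mat m n × Mat m n :=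
  (X.1, Tinvmap K p2 q2 p3 q3 (X.2.1, X.2.2))

/-- `R⁻¹` acting on components 2 and 3 of a triple. -/
noncomputable def Rinv23t {m n : ℕ} (K : Matrix (Fin n) (Fin m) ℝ) (p2 q2 p3 q3 : ℝ)
    (X : Mat m n × Mat m n × Mat m n) : Mat m n × Mat m n × Mat m n :=
  (X.1, Rinvmap K p2 q2 p3 q3 (X.2.1, X.2.2))

/-!
If `X` has rank at most one, then `X M X = tr(M X) X` for every `M`. Hence a matrix of rank at most
one is a rank-one `K`-projection exactly when `tr(K X) = 1`. Both components of `R` are products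
with a factor of rank one, and by cyclicity of the trace `α₁₂` is precisely the factor that
normalises `tr(K X')` to one. For the conservation law, expand `(p₁ - q₁) D₁ + (p₂ - q₂) D₂`, where
`Xᵢ' = α₁₂ Dᵢ`: the terms in `X₁ K X₂` and `X₂ K X₁` cancel, and `X₂ K X₁ K X₂` and `X₁ K X₂ K X₁`
are multiples of `X₂` and `X₁`, so that the sum collapses to `α₁₂⁻¹ ((p₁ - q₁) X₁ + (p₂ - q₂) X₂)`.
-/

section RankLeOne

variable {F m n : Type*} [Field F] [Fintype n]

theorem eq_zero_of_rank_eq_zero {X : Matrix m n F} (hX : X.rank = 0) : X = 0 := by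
  have hX' : X.mulVecLin = 0 := by
    rwa [Matrix.rank, Submodule.finrank_eq_zero, LinearMap.range_eq_bot] at hX
  refine mulVec_injective (funext fun v => ?_)
  rw [zero_mulVec, ← mulVecLin_apply, hX', LinearMap.zero_apply]

theorem exists_eq_vecMulVec_of_rank_le_one {X : Matrix m n F} (hX : X.rank ≤ 1) :
    ∃ (u : m → F) (v : n → F), X = vecMulVec u v := by
  classical
  obtain ⟨u, hu⟩ := finrank_le_one_iff.mp hX
  have hcol (j : n) : ∃ c : F, c • (u : m → F) = X.col j := by
    obtain ⟨c, hc⟩ := hu ⟨X *ᵥ Pi.single j 1, LinearMap.mem_range_self X.mulVecLin _⟩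
    exact ⟨c, (congrArg Subtype.val hc).trans (X.mulVec_single_one j)⟩
  choose v hv using hcol
  refine ⟨u, v, ?_⟩
  ext i j
  rw [vecMulVec_apply, mul_comm]
  exact (congrFun (hv j) i).symm

theorem mul_mul_self_eq_trace_smul_of_rank_le_one [Fintype m] {X : Matrix m n F}
    (hX : X.rank ≤ 1) (M : Matrix n m F) : X * M * X = (M * X).trace • X := by
  obtain ⟨u, v, rfl⟩ := exists_eq_vecMulVec_of_rank_le_one hX
  rw [Matrix.mul_assoc, mul_vecMulVec, vecMulVec_mul_vecMulVec, vecMulVec_smul, trace_vecMulVec,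
    dotProduct_comm]

/-- Rank-one `K`-projections over an arbitrary field and with arbitrary finite index types;
`InS` is the real case with index types `Fin m` and `Fin n`. -/
def IsRankOneProjection [Fintype m] (K : Matrix n m F) (X : Matrix m n F) : Prop :=
  X * K * X = X ∧ X.rank = 1

theorem isRankOneProjection_iff_rank_le_one_and_trace_eq_one [Fintype m] {K : Matrix n m F}
    {X : Matrix m n F} : IsRankOneProjection K X ↔ X.rank ≤ 1 ∧ (K * X).trace = 1 := by
  constructor
  · rintro ⟨hXKX, hrank⟩
    have hX : X ≠ 0 := by
      rintro rfl
      exact zero_ne_one (rank_zero.symm.trans hrank)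
    have htrace : (K * X).trace • X = (1 : F) • X := by
      rw [← mul_mul_self_eq_trace_smul_of_rank_le_one hrank.le, hXKX, one_smul]
    exact ⟨hrank.le, smul_left_injective F hX htrace⟩
  · rintro ⟨hrank, htrace⟩
    have hXKX : X * K * X = X := by
      rw [mul_mul_self_eq_trace_smul_of_rank_le_one hrank, htrace, one_smul]
    have hX : X ≠ 0 := by
      rintro rfl
      simp at htrace
    have hrank0 : X.rank ≠ 0 := mt eq_zero_of_rank_eq_zero hX
    exact ⟨hXKX, hrank.antisymm (Nat.one_le_iff_ne_zero.mpr hrank0)⟩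

end RankLeOne

section Dressing

variable {R m n : Type*} [CommRing R] [Fintype m] [Fintype n]

theorem trace_mul_mul_mul_comm (K : Matrix n m R) (X Y : Matrix m n R) :
    (K * X * K * Y).trace = (K * Y * K * X).trace := by
  rw [Matrix.mul_assoc (K * X), trace_mul_comm, ← Matrix.mul_assoc]

variable [DecidableEq m] [DecidableEq n]

/-- The product `(1 - c Y K) X (1 - d K Y)`. Up to the factor `α₁₂`, both components of the
Yang–Baxter map have this form. -/
def dressing (K : Matrix n m R) (c d : R) (X Y : Matrix m n R) : Matrix m n R :=
  (1 - c • (Y * K)) * X * (1 - d • (K * Y))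

theorem rank_dressing_le [StrongRankCondition R] (K : Matrix n m R) (c d : R)
    (X Y : Matrix m n R) : (dressing K c d X Y).rank ≤ X.rank :=
  (rank_mul_le_left _ _).trans (rank_mul_le_right _ _)

theorem dressing_eq (K : Matrix n m R) (c d : R) (X Y : Matrix m n R) :
    dressing K c d X Y =
      X - c • (Y * K * X) - d • (X * K * Y) + (c * d) • (Y * (K * X * K) * Y) := by
  simp only [dressing, Matrix.sub_mul, Matrix.mul_sub, Matrix.one_mul, Matrix.mul_one,
    Matrix.smul_mul, Matrix.mul_smul, Matrix.mul_assoc]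
  module

theorem trace_mul_dressing (K : Matrix n m R) (c d : R) (X : Matrix m n R) {Y : Matrix m n R}
    (hY : Y * K * Y = Y) :
    (K * dressing K c d X Y).trace =
      (K * X).trace - (c + d - c * d) * (K * X * K * Y).trace := by
  have hYX : (K * (Y * K * X)).trace = (K * X * K * Y).trace := by
    rw [trace_mul_mul_mul_comm K X Y]
    simp only [Matrix.mul_assoc]
  have hXY : (K * (X * K * Y)).trace = (K * X * K * Y).trace := by
    simp only [Matrix.mul_assoc]
  have hYXY : (K * (Y * (K * X * K) * Y)).trace = (K * X * K * Y).trace :=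
    calc (K * (Y * (K * X * K) * Y)).trace
        = (K * Y * (K * X * K * Y)).trace := by simp only [Matrix.mul_assoc]
      _ = (K * X * K * Y * (K * Y)).trace := trace_mul_comm _ _
      _ = (K * X * K * (Y * K * Y)).trace := by simp only [Matrix.mul_assoc]
      _ = (K * X * K * Y).trace := by rw [hY]
  rw [dressing_eq]
  simp only [Matrix.mul_add, Matrix.mul_sub, Matrix.mul_smul, trace_add, trace_sub, trace_smul,
    hYX, hXY, hYXY, smul_eq_mul]
  ring

end Dressing

section RankOneDressing

variable {F m n : Type*} [Field F] [Fintype m] [Fintype n] [DecidableEq m] [DecidableEq n]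

theorem IsRankOneProjection.inv_smul_dressing {K : Matrix n m F} {X Y : Matrix m n F}
    (hX : IsRankOneProjection K X) (hY : Y * K * Y = Y) {c d s : F} (hs : s ≠ 0)
    (hcd : s = 1 - (c + d - c * d) * (K * X * K * Y).trace) :
    IsRankOneProjection K (s⁻¹ • dressing K c d X Y) := by
  rw [isRankOneProjection_iff_rank_le_one_and_trace_eq_one] at hX ⊢
  constructor
  · rw [rank_smul_of_mem_nonZeroDivisors _ (mem_nonZeroDivisors_of_ne_zero (inv_ne_zero hs))]
    exact (rank_dressing_le K c d X Y).trans hX.1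
  · rw [Matrix.mul_smul, trace_smul, trace_mul_dressing K c d X hY, hX.2, ← hcd, smul_eq_mul,
      inv_mul_cancel₀ hs]

theorem smul_dressing_add_smul_dressing {X Y : Matrix m n F} (hX : X.rank ≤ 1) (hY : Y.rank ≤ 1)
    (K : Matrix n m F) {a b c d c' d' : F} (hYX : a * c + b * d' = 0) (hXY : a * d + b * c' = 0) :
    a • dressing K c d X Y + b • dressing K c' d' Y X =
      (a + b * (c' * d') * (K * X * K * Y).trace) • X +
        (b + a * (c * d) * (K * X * K * Y).trace) • Y := by
  rw [dressing_eq, dressing_eq, mul_mul_self_eq_trace_smul_of_rank_le_one hX,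
    mul_mul_self_eq_trace_smul_of_rank_le_one hY, trace_mul_mul_mul_comm K Y X]
  linear_combination (norm := module) -(hYX • (Y * K * X)) - hXY • (X * K * Y)

end RankOneDressing

section YangBaxterMap

variable {F m n : Type*} [Field F] [Fintype m] [Fintype n]

/-- The inverse of `α₁₂`, over an arbitrary field; `adenom` is the real case. -/
def yangBaxterDenom (K : Matrix n m F) (p1 q1 p2 q2 : F) (X1 X2 : Matrix m n F) : F :=
  1 - (p1 - q1) * (p2 - q2) / ((p2 - p1) * (q2 - q1)) * (K * X1 * K * X2).trace

variable [DecidableEq m] [DecidableEq n]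

/-- The Yang–Baxter map `R(p1,q1;p2,q2)` over an arbitrary field; `Rmap` is the real case. -/
def yangBaxterMap (K : Matrix n m F) (p1 q1 p2 q2 : F) (X : Matrix m n F × Matrix m n F) :
    Matrix m n F × Matrix m n F :=
  ((yangBaxterDenom K p1 q1 p2 q2 X.1 X.2)⁻¹ •
      dressing K ((p2 - q2) / (p2 - p1)) ((p2 - q2) / (q1 - q2)) X.1 X.2,
   (yangBaxterDenom K p1 q1 p2 q2 X.1 X.2)⁻¹ •
      dressing K ((p1 - q1) / (q2 - q1)) ((p1 - q1) / (p1 - p2)) X.2 X.1)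

variable {K : Matrix n m F} {p1 q1 p2 q2 : F} {X1 X2 : Matrix m n F}

theorem isRankOneProjection_yangBaxterMap_fst (hp : p1 ≠ p2) (hq : q1 ≠ q2)
    (hX1 : IsRankOneProjection K X1) (hX2 : X2 * K * X2 = X2)
    (hs : yangBaxterDenom K p1 q1 p2 q2 X1 X2 ≠ 0) :
    IsRankOneProjection K (yangBaxterMap K p1 q1 p2 q2 (X1, X2)).1 := by
  refine hX1.inv_smul_dressing hX2 hs ?_
  have hcoeff : (p2 - q2) / (p2 - p1) + (p2 - q2) / (q1 - q2)
      - (p2 - q2) / (p2 - p1) * ((p2 - q2) / (q1 - q2))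
      = (p1 - q1) * (p2 - q2) / ((p2 - p1) * (q2 - q1)) := by grind
  rw [yangBaxterDenom, hcoeff]

theorem isRankOneProjection_yangBaxterMap_snd (hp : p1 ≠ p2) (hq : q1 ≠ q2)
    (hX1 : X1 * K * X1 = X1) (hX2 : IsRankOneProjection K X2)
    (hs : yangBaxterDenom K p1 q1 p2 q2 X1 X2 ≠ 0) :
    IsRankOneProjection K (yangBaxterMap K p1 q1 p2 q2 (X1, X2)).2 := by
  refine hX2.inv_smul_dressing hX1 hs ?_
  have hcoeff : (p1 - q1) / (q2 - q1) + (p1 - q1) / (p1 - p2)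
      - (p1 - q1) / (q2 - q1) * ((p1 - q1) / (p1 - p2))
      = (p1 - q1) * (p2 - q2) / ((p2 - p1) * (q2 - q1)) := by grind
  rw [yangBaxterDenom, hcoeff, trace_mul_mul_mul_comm]

theorem smul_dressing_add_smul_dressing_eq_yangBaxterDenom_smul (hX1 : X1.rank ≤ 1)
    (hX2 : X2.rank ≤ 1) :
    (p1 - q1) • dressing K ((p2 - q2) / (p2 - p1)) ((p2 - q2) / (q1 - q2)) X1 X2 +
        (p2 - q2) • dressing K ((p1 - q1) / (q2 - q1)) ((p1 - q1) / (p1 - p2)) X2 X1 =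
      yangBaxterDenom K p1 q1 p2 q2 X1 X2 • ((p1 - q1) • X1 + (p2 - q2) • X2) := by
  rw [← neg_sub p2 p1, ← neg_sub q2 q1, div_neg, div_neg]
  have hX2X1 : (p1 - q1) * ((p2 - q2) / (p2 - p1)) + (p2 - q2) * -((p1 - q1) / (p2 - p1)) = 0 := by
    ring
  have hX1X2 : (p1 - q1) * -((p2 - q2) / (q2 - q1)) + (p2 - q2) * ((p1 - q1) / (q2 - q1)) = 0 := by
    ring
  rw [smul_dressing_add_smul_dressing hX1 hX2 K hX2X1 hX1X2, yangBaxterDenom,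
    mul_div_mul_comm]
  module

theorem yangBaxterMap_conservation (hX1 : X1.rank ≤ 1) (hX2 : X2.rank ≤ 1)
    (hs : yangBaxterDenom K p1 q1 p2 q2 X1 X2 ≠ 0) :
    (p1 - q1) • ((yangBaxterMap K p1 q1 p2 q2 (X1, X2)).1 - X1) +
      (p2 - q2) • ((yangBaxterMap K p1 q1 p2 q2 (X1, X2)).2 - X2) = 0 := by
  set s := yangBaxterDenom K p1 q1 p2 q2 X1 X2
  set D1 := dressing K ((p2 - q2) / (p2 - p1)) ((p2 - q2) / (q1 - q2)) X1 X2
  set D2 := dressing K ((p1 - q1) / (q2 - q1)) ((p1 - q1) / (p1 - p2)) X2 X1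
  have hD : (p1 - q1) • D1 + (p2 - q2) • D2 = s • ((p1 - q1) • X1 + (p2 - q2) • X2) :=
    smul_dressing_add_smul_dressing_eq_yangBaxterDenom_smul hX1 hX2
  calc (p1 - q1) • (s⁻¹ • D1 - X1) + (p2 - q2) • (s⁻¹ • D2 - X2)
      = s⁻¹ • ((p1 - q1) • D1 + (p2 - q2) • D2) - ((p1 - q1) • X1 + (p2 - q2) • X2) := by module
    _ = 0 := by rw [hD, inv_smul_smul₀ hs, sub_self]

end YangBaxterMap

theorem Rmap_preserves_S_and_conservation_general {F m n : Type*} [Field F] [Fintype m]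
    [Fintype n] [DecidableEq m] [DecidableEq n] {K : Matrix n m F} {p1 q1 p2 q2 : F}
    (hp : p1 ≠ p2) (hq : q1 ≠ q2) {X1 X2 : Matrix m n F}
    (hX1 : IsRankOneProjection K X1) (hX2 : IsRankOneProjection K X2)
    (ha : yangBaxterDenom K p1 q1 p2 q2 X1 X2 ≠ 0) :
    IsRankOneProjection K (yangBaxterMap K p1 q1 p2 q2 (X1, X2)).1 ∧
    IsRankOneProjection K (yangBaxterMap K p1 q1 p2 q2 (X1, X2)).2 ∧
    (p1 - q1) • ((yangBaxterMap K p1 q1 p2 q2 (X1, X2)).1 - X1)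
      + (p2 - q2) • ((yangBaxterMap K p1 q1 p2 q2 (X1, X2)).2 - X2) = 0 :=
  ⟨isRankOneProjection_yangBaxterMap_fst hp hq hX1 hX2.1 ha,
    isRankOneProjection_yangBaxterMap_snd hp hq hX1.1 hX2 ha,
    yangBaxterMap_conservation hX1.2.le hX2.2.le ha⟩

/-- `R` maps `S × S` to `S × S`, and `(p1−q1)(X1'−X1) + (p2−q2)(X2'−X2) = 0`. -/
theorem Rmap_preserves_S_and_conservation
    (m n : ℕ) (hm : 0 < m) (hn : 0 < n)
    (K : Matrix (Fin n) (Fin m) ℝ) (hK : K.rank = min n m)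
    (p1 q1 p2 q2 : ℝ)
    (hdist : List.Pairwise (· ≠ ·) [p1, q1, p2, q2])
    (X1 X2 : Mat m n) (hX1 : InS K X1) (hX2 : InS K X2)
    (ha : adenom K p1 q1 p2 q2 X1 X2 ≠ 0) :
    InS K (Rmap K p1 q1 p2 q2 (X1, X2)).1 ∧
    InS K (Rmap K p1 q1 p2 q2 (X1, X2)).2 ∧
    (p1 - q1) • ((Rmap K p1 q1 p2 q2 (X1, X2)).1 - X1)
      + (p2 - q2) • ((Rmap K p1 q1 p2 q2 (X1, X2)).2 - X2) = 0 := by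
  have hp : p1 ≠ p2 := by grind
  have hq : q1 ≠ q2 := by grind
  exact Rmap_preserves_S_and_conservation_general hp hq hX1 hX2 ha
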